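/- For every q ∈ ℍ the kernel k_q(p) = Σ_{n=0}^∞ pⁿ q̄ⁿ / n! belongs to the slice hyperholomorphic quaternionic Fock space; more precisely, for every imaginary unit I ∈ 𝕊, (1/π) ∫_{ℝ²} e^{−(x²+y²)} |k_q(x+yI)|² \,dx\,dy = Σ_{n=0}^∞ |q|^{2n}/n! = e^{|q|²} < ∞. -/

import Mathlib

open MeasureTheory Real Nat

noncomputable section

local notation "ℍ" => Quaternion ℝ

/-- The sphere of quaternionic imaginary units. -/
def quatSphere : Set ℍ := {q | q.re = 0 ∧ ‖q‖ = 1}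

/-- The point `x + y I` of the slice `ℂ_I`. -/
def sliceVal (I : ℍ) (z : ℝ × ℝ) : ℍ := ((z.1 : ℍ)) + ((z.2 : ℍ)) * I

/-- The squared Fock norm of `f` on the slice `ℂ_I`, with values in `[0,∞]`. -/
def fockNormSq (I : ℍ) (f : ℍ → ℍ) : ENNReal :=
  ENNReal.ofReal π⁻¹ *
    ∫⁻ z : ℝ × ℝ, ENNReal.ofReal (Real.exp (-(z.1 ^ 2 + z.2 ^ 2)) * ‖f (sliceVal I z)‖ ^ 2)

/-- The reproducing kernel `k_q(p) = e_⋆^{p q̄} = Σ pⁿ q̄ⁿ / n!`. -/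
def fockKernel (q : ℍ) : ℍ → ℍ := fun p => ∑' n : ℕ, ((n ! : ℝ)⁻¹) • (p ^ n * (star q) ^ n)

@[simp] lemma aux_one_re : (1 : ℍ).re = 1 := rfl
@[simp] lemma aux_one_imI : (1 : ℍ).imI = 0 := rfl
@[simp] lemma aux_one_imJ : (1 : ℍ).imJ = 0 := rfl
@[simp] lemma aux_one_imK : (1 : ℍ).imK = 0 := rfl

def auxUnit : ℍ := ⟨0, 1, 0, 0⟩

lemma auxUnit_mem : auxUnit ∈ quatSphere := by
  refine ⟨rfl, ?_⟩
  have : ‖auxUnit‖ * ‖auxUnit‖ = 1 := by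
    rw [← Quaternion.normSq_eq_norm_mul_self, Quaternion.normSq_def']; norm_num [auxUnit]
  nlinarith [norm_nonneg auxUnit]

lemma aux_sq {I : ℍ} (hI : I ∈ quatSphere) : I * I = -1 := by
  obtain ⟨h0, h1⟩ := hI
  have := (Quaternion.sq_eq_neg_normSq (a := I)).mpr h0
  rw [← sq, this, Quaternion.normSq_eq_norm_mul_self, h1]
  simp

lemma aux_slice (I : ℍ) (z : ℝ × ℝ) : sliceVal I z = z.1 • (1 : ℍ) + z.2 • I := by
  unfold sliceVal
  rw [Quaternion.coe_mul_eq_smul]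
  congr 1
  ext <;> simp

/-- Every quaternion lies in some slice. -/
lemma aux_decomp (q : ℍ) : ∃ J ∈ quatSphere, ∃ r s : ℝ, star q = r • (1 : ℍ) + s • J ∧
    r ^ 2 + s ^ 2 = ‖q‖ ^ 2 := by
  have key : ∃ J ∈ quatSphere, ∃ r s : ℝ, star q = r • (1 : ℍ) + s • J := by
    by_cases h : (star q).im = 0
    · refine ⟨auxUnit, auxUnit_mem, (star q).re, 0, ?_⟩
      conv_lhs => rw [← Quaternion.re_add_im (star q), h]
      ext <;> simp
    · have hn : ‖(star q).im‖ ≠ 0 := norm_ne_zero_iff.mpr h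
      refine ⟨‖(star q).im‖⁻¹ • (star q).im, ⟨?_, ?_⟩, (star q).re, ‖(star q).im‖, ?_⟩
      · rw [Quaternion.re_smul, Quaternion.re_im, smul_zero]
      · rw [norm_smul, norm_inv, norm_norm, inv_mul_cancel₀ hn]
      · rw [smul_smul, mul_inv_cancel₀ hn, one_smul]
        conv_lhs => rw [← Quaternion.re_add_im (star q)]
        congr 1
        ext <;> simp
  obtain ⟨J, hJ, r, s, h⟩ := key
  refine ⟨J, hJ, r, s, h, ?_⟩
  obtain ⟨h0, h1⟩ := hJ
  have e : Quaternion.normSq J = 1 := by rw [Quaternion.normSq_eq_norm_mul_self, h1, mul_one]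
  have e2 : Quaternion.normSq (star q) = ‖q‖ ^ 2 := by
    rw [Quaternion.normSq_star, Quaternion.normSq_eq_norm_mul_self, sq]
  rw [← e2, h]
  rw [Quaternion.normSq_def'] at e ⊢
  simp [h0] at e ⊢
  linear_combination (-s ^ 2) * e

lemma aux_exp {I : ℍ} (hI : I ∈ quatSphere) (a b : ℝ) :
    ∃ c d : ℝ, NormedSpace.exp (a • (1 : ℍ) + b • I) = c • (1 : ℍ) + d • I := by
  have h0 := hI.1
  have him : (a • (1 : ℍ) + b • I).im = b • I := by
    ext <;> simp [h0]
  rw [Quaternion.exp_eq, him]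
  set e := NormedSpace.exp (a • (1 : ℍ) + b • I).re
  refine ⟨e * Real.cos ‖b • I‖, e * (Real.sin ‖b • I‖ / ‖b • I‖ * b), ?_⟩
  rw [smul_add, smul_smul, smul_smul, mul_assoc]
  congr 1
  ext <;> simp

lemma aux_normexp {I : ℍ} (hI : I ∈ quatSphere) (a b : ℝ) :
    ‖NormedSpace.exp (a • (1 : ℍ) + b • I)‖ = Real.exp a := by
  rw [Quaternion.norm_exp]
  have : (a • (1 : ℍ) + b • I).re = a := by simp [hI.1]
  rw [this, ← Real.exp_eq_exp_ℝ, Real.norm_eq_abs, abs_of_pos (Real.exp_pos _)]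

lemma aux_mul {I : ℍ} (hI : I ∈ quatSphere) (a b c d : ℝ) :
    (a • (1 : ℍ) + b • I) * (c • (1 : ℍ) + d • I)
      = (a * c - b * d) • (1 : ℍ) + (a * d + b * c) • I := by
  have := aux_sq hI
  simp only [mul_add, add_mul, smul_mul_smul_comm, this, one_mul, mul_one]
  module

lemma aux_orth {I J : ℍ} (hI : I ∈ quatSphere) (hJ : J ∈ quatSphere) (a b c d : ℝ) :
    ((a • (1 : ℍ) + b • I) * (1 - I * J) * star ((c • (1 : ℍ) + d • I) * (1 + I * J))).re = 0 := by
  have hII := aux_sq hI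
  have hJJ := aux_sq hJ
  have sI : star I = -I := Quaternion.star_eq_neg.mpr hI.1
  have sJ : star J = -J := Quaternion.star_eq_neg.mpr hJ.1
  have hcyc : ∀ x y : ℍ, (x * y).re = (y * x).re := by
    intro x y; simp; ring
  have huv : (1 - I * J) * star (1 + I * J) = J * I - I * J := by
    have : I * J * (J * I) = 1 := by
      rw [mul_assoc, ← mul_assoc J, hJJ]; simp [hII]
    rw [star_add, star_mul, sI, sJ, star_one, neg_mul_neg, mul_add, sub_mul, sub_mul, this]
    simp
  have sF : star (c • (1 : ℍ) + d • I) = c • (1 : ℍ) + (-d) • I := by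
    simp [sI]
  rw [star_mul, ← mul_assoc, hcyc, mul_assoc _ _ (star (1 + I * J)), huv, sF, ← mul_assoc,
    aux_mul hI, add_mul, smul_mul_assoc, smul_mul_assoc, one_mul, mul_sub, Quaternion.re_add,
    Quaternion.re_smul, Quaternion.re_smul, Quaternion.re_sub, Quaternion.re_sub, hcyc J I,
    hcyc I (J * I), hcyc I (I * J), mul_assoc J I I, mul_assoc I J I, hcyc I (J * I), mul_assoc J I I]
  simp

lemma aux_hasSum {I J : ℍ} (hI : I ∈ quatSphere) (hJ : J ∈ quatSphere) (x y r s : ℝ) :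
    HasSum (fun n : ℕ => ((n ! : ℝ)⁻¹) •
      ((x • (1 : ℍ) + y • I) ^ n * (r • (1 : ℍ) + s • J) ^ n))
      (NormedSpace.exp ((x * r - y * s) • (1 : ℍ) + (x * s + y * r) • I) *
          ((1 / 2 : ℝ) • (1 - I * J)) +
        NormedSpace.exp ((x * r + y * s) • (1 : ℍ) + (y * r - x * s) • I) *
          ((1 / 2 : ℝ) • (1 + I * J))) := by
  have hII := aux_sq hI
  have hJJ := aux_sq hJ
  have e1 := aux_mul hI x y r s
  have e2 := aux_mul hI x y r (-s)
  have e1' := aux_mul hI r s x y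
  have e2' := aux_mul hI r (-s) x y
  have h1 := (NormedSpace.exp_series_hasSum_exp' (𝕂 := ℝ)
    ((x • (1 : ℍ) + y • I) * (r • (1 : ℍ) + s • I))).mul_right ((1 / 2 : ℝ) • (1 - I * J))
  have h2 := (NormedSpace.exp_series_hasSum_exp' (𝕂 := ℝ)
    ((x • (1 : ℍ) + y • I) * (r • (1 : ℍ) + (-s) • I))).mul_right ((1 / 2 : ℝ) • (1 + I * J))
  have c1 : Commute (x • (1 : ℍ) + y • I) (r • (1 : ℍ) + s • I) := by
    unfold Commute SemiconjBy; rw [e1, e1']; module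
  have c2 : Commute (x • (1 : ℍ) + y • I) (r • (1 : ℍ) + (-s) • I) := by
    unfold Commute SemiconjBy; rw [e2, e2']; module
  have s1 : SemiconjBy ((1 / 2 : ℝ) • (1 - I * J)) (r • (1 : ℍ) + s • J)
      (r • (1 : ℍ) + s • I) := by
    unfold SemiconjBy
    simp only [mul_add, add_mul, mul_sub, smul_mul_smul_comm, sub_mul, mul_assoc, hJJ, one_mul,
      mul_one, ← mul_assoc I I J, hII, mul_neg, neg_mul]
    module
  have s2 : SemiconjBy ((1 / 2 : ℝ) • (1 + I * J)) (r • (1 : ℍ) + s • J)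
      (r • (1 : ℍ) + (-s) • I) := by
    unfold SemiconjBy
    simp only [mul_add, add_mul, smul_mul_smul_comm, mul_assoc, hJJ, one_mul,
      mul_one, ← mul_assoc I I J, hII, mul_neg, neg_mul]
    module
  have h := h1.add h2
  rw [e1, e2] at h
  have t1 : x * r - y * -s = x * r + y * s := by ring
  have t2 : x * -s + y * r = y * r - x * s := by ring
  rw [t1, t2] at h
  refine h.congr_fun ?_ |> fun h => h
  intro n
  rw [← t1, ← t2, ← e1, ← e2, c1.mul_pow, c2.mul_pow, smul_mul_assoc, smul_mul_assoc, ← smul_add,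
    mul_assoc, mul_assoc, ← (s1.pow_right n).eq, ← (s2.pow_right n).eq, ← mul_add, ← add_mul]
  have : (1 / 2 : ℝ) • (1 - I * J) + (1 / 2 : ℝ) • (1 + I * J) = 1 := by module
  rw [this, one_mul]

lemma aux_norm {I J : ℍ} (hI : I ∈ quatSphere) (hJ : J ∈ quatSphere) (r s : ℝ) (q : ℍ)
    (hq : star q = r • (1 : ℍ) + s • J) : ∃ A B : ℝ, 0 ≤ A ∧ 0 ≤ B ∧ A + B = 1 ∧
    ∀ z : ℝ × ℝ, ‖fockKernel q (sliceVal I z)‖ ^ 2 =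
      A * Real.exp (2 * (r * z.1 - s * z.2)) + B * Real.exp (2 * (r * z.1 + s * z.2)) := by
  refine ⟨‖(1 / 2 : ℝ) • (1 - I * J)‖ ^ 2, ‖(1 / 2 : ℝ) • (1 + I * J)‖ ^ 2, by positivity,
    by positivity, ?_, ?_⟩
  · have := parallelogram_law_with_norm ℝ (1 : ℍ) (I * J)
    rw [norm_mul, hI.2, hJ.2, norm_one] at this
    rw [norm_smul, norm_smul]
    norm_num
    linear_combination this / 4
  · rintro ⟨x, y⟩
    unfold fockKernel
    rw [hq, aux_slice, (aux_hasSum hI hJ x y r s).tsum_eq]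
    have n1 := aux_normexp hI (x * r - y * s) (x * s + y * r)
    have n2 := aux_normexp hI (x * r + y * s) (y * r - x * s)
    obtain ⟨a, b, h1⟩ := aux_exp hI (x * r - y * s) (x * s + y * r)
    obtain ⟨c, d, h2⟩ := aux_exp hI (x * r + y * s) (y * r - x * s)
    rw [h1] at n1 ⊢
    rw [h2] at n2 ⊢
    rw [sq, ← Quaternion.normSq_eq_norm_mul_self, Quaternion.normSq_add,
      Quaternion.normSq_eq_norm_mul_self, Quaternion.normSq_eq_norm_mul_self]
    have ho := aux_orth hI hJ a b c d
    have : ((a • (1 : ℍ) + b • I) * ((1 / 2 : ℝ) • (1 - I * J)) *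
        star ((c • (1 : ℍ) + d • I) * ((1 / 2 : ℝ) • (1 + I * J)))).re = 0 := by
      rw [mul_smul_comm, mul_smul_comm, Quaternion.star_smul, smul_mul_smul_comm,
        Quaternion.re_smul, ho, smul_zero]
    rw [this, norm_mul, norm_mul, n1, n2]
    have f1 : Real.exp (2 * (r * x - s * y)) = Real.exp (x * r - y * s) ^ 2 := by
      rw [← Real.exp_nat_mul]; congr 1; push_cast; ring
    have f2 : Real.exp (2 * (r * x + s * y)) = Real.exp (x * r + y * s) ^ 2 := by
      rw [← Real.exp_nat_mul]; congr 1; push_cast; ring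
    simp only [f1, f2]
    ring

lemma aux_gauss (r s : ℝ) :
    Integrable (fun z : ℝ × ℝ => Real.exp (-(z.1 ^ 2 + z.2 ^ 2)) *
      Real.exp (2 * (r * z.1 + s * z.2))) ∧
    ∫ z : ℝ × ℝ, Real.exp (-(z.1 ^ 2 + z.2 ^ 2)) * Real.exp (2 * (r * z.1 + s * z.2)) =
      π * Real.exp (r ^ 2 + s ^ 2) := by
  have hi : ∀ t : ℝ, Integrable (fun x : ℝ => Real.exp (-1 * (x - t) ^ 2)) := fun t =>
    (integrable_exp_neg_mul_sq one_pos).comp_sub_right t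
  have hv : ∀ t : ℝ, ∫ x : ℝ, Real.exp (-1 * (x - t) ^ 2) = √π := fun t => by
    rw [integral_sub_right_eq_self (fun x : ℝ => Real.exp (-1 * x ^ 2)) t, integral_gaussian,
      div_one]
  have he : (fun z : ℝ × ℝ => Real.exp (-(z.1 ^ 2 + z.2 ^ 2)) *
      Real.exp (2 * (r * z.1 + s * z.2))) = fun z : ℝ × ℝ => Real.exp (r ^ 2 + s ^ 2) *
        (Real.exp (-1 * (z.1 - r) ^ 2) * Real.exp (-1 * (z.2 - s) ^ 2)) := by
    funext z
    rw [← Real.exp_add, ← Real.exp_add, ← Real.exp_add]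
    congr 1; ring
  rw [he]
  constructor
  · exact ((hi r).mul_prod (hi s)).const_mul _
  · rw [integral_const_mul, Measure.volume_eq_prod,
      integral_prod_mul (fun x : ℝ => Real.exp (-1 * (x - r) ^ 2))
        (fun y : ℝ => Real.exp (-1 * (y - s) ^ 2)), hv, hv, Real.mul_self_sqrt Real.pi_pos.le,
      mul_comm]

lemma aux_main (q : ℍ) (I : ℍ) (hI : I ∈ quatSphere) :
    fockNormSq I (fockKernel q) = ENNReal.ofReal (Real.exp (‖q‖ ^ 2)) := by
  obtain ⟨J, hJ, r, s, hq, hrs⟩ := aux_decomp q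
  obtain ⟨A, B, hA, hB, hAB, hn⟩ := aux_norm hI hJ r s q hq
  obtain ⟨i1, v1⟩ := aux_gauss r (-s)
  obtain ⟨i2, v2⟩ := aux_gauss r s
  have he : (fun z : ℝ × ℝ => Real.exp (-(z.1 ^ 2 + z.2 ^ 2)) *
      ‖fockKernel q (sliceVal I z)‖ ^ 2) = fun z : ℝ × ℝ =>
      A * (Real.exp (-(z.1 ^ 2 + z.2 ^ 2)) * Real.exp (2 * (r * z.1 + (-s) * z.2))) +
      B * (Real.exp (-(z.1 ^ 2 + z.2 ^ 2)) * Real.exp (2 * (r * z.1 + s * z.2))) := by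
    funext z
    rw [hn, show r * z.1 + -s * z.2 = r * z.1 - s * z.2 by ring]
    ring
  unfold fockNormSq
  rw [← ofReal_integral_eq_lintegral_ofReal, he, integral_add (i1.const_mul A) (i2.const_mul B),
    integral_const_mul, integral_const_mul, v1, v2, ← ENNReal.ofReal_mul (by positivity)]
  · congr 1
    rw [neg_sq, hrs]
    have := Real.pi_ne_zero
    field_simp
    linear_combination hAB
  · rw [he]; exact (i1.const_mul A).add (i2.const_mul B)
  · exact Filter.Eventually.of_forall fun z => by positivity

theorem fockKernel_mem_fockSpace (q : ℍ) (I : ℍ) (hI : I ∈ quatSphere) :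
    fockNormSq I (fockKernel q) = ∑' n : ℕ, ENNReal.ofReal (‖q‖ ^ (2 * n) / (n ! : ℝ)) ∧
      (∑' n : ℕ, ENNReal.ofReal (‖q‖ ^ (2 * n) / (n ! : ℝ))) =
        ENNReal.ofReal (Real.exp (‖q‖ ^ 2)) ∧
      fockNormSq I (fockKernel q) < ⊤ := by
  have h2 : (∑' n : ℕ, ENNReal.ofReal (‖q‖ ^ (2 * n) / (n ! : ℝ))) =
        ENNReal.ofReal (Real.exp (‖q‖ ^ 2)) := by
    have hs := NormedSpace.expSeries_div_hasSum_exp (‖q‖ ^ 2)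
    rw [← Real.exp_eq_exp_ℝ] at hs
    simp only [← pow_mul] at hs
    rw [← ENNReal.ofReal_tsum_of_nonneg (fun n => by positivity) hs.summable, hs.tsum_eq]
  have h1 := aux_main q I hI
  exact ⟨h1.trans h2.symm, h2, h1 ▸ ENNReal.ofReal_lt_top⟩
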